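/- Assume (H2). There exists a constant C > 0, depending only on a₀ and C₀, such that for every τ ∈ (0,1) and every w ∈ C₀^∞(K; ℂ): (1 - τ²) q^{A⁰,0}_K(w) + (1 - τ⁻²) C ε₀⁴ b(x₀,e^{t₀})² ‖w‖²_{L²(K)} ≤ q̂^{Ã,0}_K(w) ≤ (1 + τ²) q^{A⁰,0}_K(w) + (1 + τ⁻²) C ε₀⁴ b(x₀,e^{t₀})² ‖w‖²_{L²(K)}. -/

import Mathlib

open MeasureTheory Real Filter

noncomputable section

/-- The upper half-plane ℍ as a subset of ℝ². -/
def UHP : Set (ℝ × ℝ) := {p : ℝ × ℝ | 0 < p.2}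

/-- The hyperbolic measure `dv = y⁻² dx dy` on ℍ. -/
def volH : Measure (ℝ × ℝ) :=
  (volume.restrict UHP).withDensity fun p => ENNReal.ofReal ((p.2 ^ 2)⁻¹)

/-- x-derivative of a complex function on ℝ². -/
def dX (f : ℝ × ℝ → ℂ) (p : ℝ × ℝ) : ℂ := fderiv ℝ f p (1, 0)

/-- y-derivative of a complex function on ℝ². -/
def dY (f : ℝ × ℝ → ℂ) (p : ℝ × ℝ) : ℂ := fderiv ℝ f p (0, 1)

/-- x-derivative of a real function on ℝ². -/
def dXr (f : ℝ × ℝ → ℝ) (p : ℝ × ℝ) : ℝ := fderiv ℝ f p (1, 0)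

/-- y-derivative of a real function on ℝ². -/
def dYr (f : ℝ × ℝ → ℝ) (p : ℝ × ℝ) : ℝ := fderiv ℝ f p (0, 1)

/-- The magnetic field `b̃ = y² (∂ₓA₂ - ∂_yA₁)`. -/
def fieldB (A₁ A₂ : ℝ × ℝ → ℝ) (p : ℝ × ℝ) : ℝ := p.2 ^ 2 * (dXr A₂ p - dYr A₁ p)

/-- The magnetic intensity `b = |b̃|`. -/
def intenB (A₁ A₂ : ℝ × ℝ → ℝ) (p : ℝ × ℝ) : ℝ := |fieldB A₁ A₂ p|

/-- Smooth compactly supported test functions with support inside a set `Ω`. -/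
def IsTestOn (Ω : Set (ℝ × ℝ)) (f : ℝ × ℝ → ℂ) : Prop :=
  ContDiff ℝ (⊤ : ℕ∞) f ∧ HasCompactSupport f ∧ tsupport f ⊆ Ω

/-- The quadratic form of the magnetic Laplacian on ℍ. -/
def qA (A₁ A₂ : ℝ × ℝ → ℝ) (f : ℝ × ℝ → ℂ) : ℝ :=
  ∫ p, p.2 ^ 2 * (‖-Complex.I * dX f p - (A₁ p : ℂ) * f p‖ ^ 2 +
    ‖-Complex.I * dY f p - (A₂ p : ℂ) * f p‖ ^ 2) ∂volH

/-- hyperbolic distance from `(x,y)` to `(0,1)`. -/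
def hDist (p : ℝ × ℝ) : ℝ :=
  2 * Real.arsinh (Real.sqrt (p.1 ^ 2 + (p.2 - 1) ^ 2) / (2 * Real.sqrt p.2))

/-- (H1) : the magnetic intensity tends to +∞ at infinity. -/
def H1 (A₁ A₂ : ℝ × ℝ → ℝ) : Prop :=
  ∀ M : ℝ, ∃ R : ℝ, ∀ p ∈ UHP, R ≤ hDist p → M ≤ intenB A₁ A₂ p

/-- (H2) : control of the derivative of the magnetic field. -/
def H2 (C₀ : ℝ) (A₁ A₂ : ℝ × ℝ → ℝ) : Prop :=
  ∀ p ∈ UHP, p.2 * Real.sqrt ((dXr (fieldB A₁ A₂) p) ^ 2 + (dYr (fieldB A₁ A₂) p) ^ 2)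
    ≤ C₀ * (intenB A₁ A₂ p + 1)

/-- Counting function of a quadratic form `q` with form domain `dom` and squared
norm `nsq`, via Glazman's lemma. -/
def NN (q : (ℝ × ℝ → ℂ) → ℝ) (dom : Set (ℝ × ℝ → ℂ)) (nsq : (ℝ × ℝ → ℂ) → ℝ)
    (lam : ℝ) : ℕ :=
  sSup {n : ℕ | ∃ V : Submodule ℂ (ℝ × ℝ → ℂ), (V : Set (ℝ × ℝ → ℂ)) ⊆ dom ∧
    Module.finrank ℂ V = n ∧ ∀ u ∈ V, u ≠ 0 → q u < lam * nsq u}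

/-- Heaviside function `[ρ]₊⁰`. -/
def heav (ρ : ℝ) : ℝ := if 0 < ρ then 1 else 0


/-- The rectangle `K = X₀ + K₀` with `K₀ = (-ε₀ a e^{t₀}/2, ε₀ a e^{t₀}/2) × (-ε₀/2, ε₀/2)`. -/
def Krect (x₀ t₀ a ε₀ : ℝ) : Set (ℝ × ℝ) :=
  Set.Ioo (x₀ - ε₀ * a * Real.exp t₀ / 2) (x₀ + ε₀ * a * Real.exp t₀ / 2) ×ˢ
    Set.Ioo (t₀ - ε₀ / 2) (t₀ + ε₀ / 2)

/-- `Ã₁(x,t) = -∫_{e^{t₀}}^{e^t} b̃(x,s) s⁻² ds`. -/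
def Atil (A₁ A₂ : ℝ × ℝ → ℝ) (t₀ : ℝ) (p : ℝ × ℝ) : ℝ :=
  -∫ s in Real.exp t₀..Real.exp p.2, fieldB A₁ A₂ (p.1, s) / s ^ 2

/-- `A₁⁰(x,t) = -(t - t₀) e^{-t₀} b̃₀`. -/
def Azero (t₀ b₀ : ℝ) (p : ℝ × ℝ) : ℝ := -(p.2 - t₀) * Real.exp (-t₀) * b₀

/-- The Dirichlet form `q̂^Ã_K`. -/
def qhatK (A₁ A₂ : ℝ × ℝ → ℝ) (x₀ t₀ a ε₀ : ℝ) (w : ℝ × ℝ → ℂ) : ℝ :=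
  ∫ p in Krect x₀ t₀ a ε₀,
    (Real.exp (2 * p.2) * ‖-Complex.I * dX w p - (Atil A₁ A₂ t₀ p : ℂ) * w p‖ ^ 2
      + ‖dY w p‖ ^ 2 + (1/4) * ‖w p‖ ^ 2)

/-- The Dirichlet form `q̂^{Ã,0}_K` (with frozen factor `e^{2t₀}`). -/
def qhatK0 (A₁ A₂ : ℝ × ℝ → ℝ) (x₀ t₀ a ε₀ : ℝ) (w : ℝ × ℝ → ℂ) : ℝ :=
  ∫ p in Krect x₀ t₀ a ε₀,
    (Real.exp (2 * t₀) * ‖-Complex.I * dX w p - (Atil A₁ A₂ t₀ p : ℂ) * w p‖ ^ 2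
      + ‖dY w p‖ ^ 2 + (1/4) * ‖w p‖ ^ 2)

/-- The Dirichlet form `q^{A⁰,0}_K` of the frozen constant magnetic field `b̃₀`. -/
def qK0 (x₀ t₀ a ε₀ b₀ : ℝ) (w : ℝ × ℝ → ℂ) : ℝ :=
  ∫ p in Krect x₀ t₀ a ε₀,
    (Real.exp (2 * t₀) * ‖-Complex.I * dX w p - (Azero t₀ b₀ p : ℂ) * w p‖ ^ 2
      + ‖dY w p‖ ^ 2 + (1/4) * ‖w p‖ ^ 2)


lemma uhp_isOpen : IsOpen UHP := isOpen_lt continuous_const continuous_snd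

lemma fieldB_contDiffOn {A₁ A₂ : ℝ × ℝ → ℝ} (h1 : ContDiffOn ℝ 2 A₁ UHP)
    (h2 : ContDiffOn ℝ 2 A₂ UHP) : ContDiffOn ℝ 1 (fieldB A₁ A₂) UHP := by
  have e1 : ContDiffOn ℝ 1 (fderiv ℝ A₁) UHP :=
    h1.fderiv_of_isOpen uhp_isOpen (by norm_num [one_add_one_eq_two])
  have e2 : ContDiffOn ℝ 1 (fderiv ℝ A₂) UHP :=
    h2.fderiv_of_isOpen uhp_isOpen (by norm_num [one_add_one_eq_two])
  have p : ContDiffOn ℝ 1 (fun p : ℝ × ℝ => p.2 ^ 2) UHP := by fun_prop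
  exact p.mul ((e2.clm_apply contDiffOn_const).sub (e1.clm_apply contDiffOn_const))

lemma exp_le_two_of {x : ℝ} (hx : |x| ≤ 1 / 2) : Real.exp x ≤ 2 := by
  have h := Real.abs_exp_sub_one_le (x := x) (by linarith)
  have := (abs_le.mp h).2
  linarith

/-- Gronwall estimate of the variation of the field. -/
lemma field_var (B : ℝ × ℝ → ℝ) (hB : ContDiffOn ℝ 1 B UHP) (C₀ : ℝ) (hC₀ : 0 < C₀)
    (hH : ∀ p ∈ UHP, p.2 * Real.sqrt ((dXr B p) ^ 2 + (dYr B p) ^ 2) ≤ C₀ * (|B p| + 1))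
    (a₀ : ℝ) (ha₀ : 1 < a₀) (ε : ℝ) (hε : 0 < ε) (hε1 : ε < 1) (x₀ t₀ x u : ℝ)
    (hx : |x - x₀| ≤ ε * a₀ * Real.exp t₀ / 2) (hu : |u - t₀| ≤ ε / 2) :
    |B (x, Real.exp u) - B (x₀, Real.exp t₀)| ≤
      ε * (C₀ * (1 + a₀)) * Real.exp (C₀ * (1 + a₀)) * (|B (x₀, Real.exp t₀)| + 1) := by
  set b₀ := B (x₀, Real.exp t₀) with hb₀
  set γ : ℝ → ℝ × ℝ := fun θ => (x₀ + θ * (x - x₀), Real.exp (t₀ + θ * (u - t₀))) with hγ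
  have hγU : ∀ θ, γ θ ∈ UHP := fun θ => Real.exp_pos _
  have hγd : ∀ θ, HasDerivAt γ (x - x₀, Real.exp (t₀ + θ * (u - t₀)) * (u - t₀)) θ := by
    intro θ
    refine HasDerivAt.prodMk ?_ ?_
    · simpa using ((hasDerivAt_id θ).mul_const (x - x₀)).const_add x₀
    · simpa using (((hasDerivAt_id θ).mul_const (u - t₀)).const_add t₀).exp
  have hBd : ∀ p ∈ UHP, HasFDerivAt B (fderiv ℝ B p) p := fun p hp =>
    ((hB.differentiableOn (by norm_num)).differentiableAt (uhp_isOpen.mem_nhds hp)).hasFDerivAt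
  set K := ε * (C₀ * (1 + a₀)) with hK
  have hKpos : 0 < K := by positivity
  have hd : ∀ θ, HasDerivAt (fun θ => B (γ θ) - b₀)
      (fderiv ℝ B (γ θ) (x - x₀, Real.exp (t₀ + θ * (u - t₀)) * (u - t₀))) θ := fun θ =>
    ((hBd _ (hγU θ)).comp_hasDerivAt θ (hγd θ)).sub_const b₀
  have hbound : ∀ θ ∈ Set.Ico (0:ℝ) 1,
      ‖fderiv ℝ B (γ θ) (x - x₀, Real.exp (t₀ + θ * (u - t₀)) * (u - t₀))‖ ≤
        K * ‖B (γ θ) - b₀‖ + K * (|b₀| + 1) := by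
    intro θ hθ
    set y := Real.exp (t₀ + θ * (u - t₀)) with hy
    have hy0 : 0 < y := Real.exp_pos _
    have e : fderiv ℝ B (γ θ) (x - x₀, y * (u - t₀)) =
        (x - x₀) * dXr B (γ θ) + (y * (u - t₀)) * dYr B (γ θ) := by
      have : ((x - x₀, y * (u - t₀)) : ℝ × ℝ) =
          (x - x₀) • ((1, 0) : ℝ × ℝ) + (y * (u - t₀)) • ((0, 1) : ℝ × ℝ) := by
        simp
      rw [this, map_add, map_smul, map_smul]
      simp [dXr, dYr]
    have h := hH _ (hγU θ)
    have hX : |dXr B (γ θ)| ≤ Real.sqrt ((dXr B (γ θ)) ^ 2 + (dYr B (γ θ)) ^ 2) :=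
      Real.abs_le_sqrt (by nlinarith [sq_nonneg (dYr B (γ θ))])
    have hY : |dYr B (γ θ)| ≤ Real.sqrt ((dXr B (γ θ)) ^ 2 + (dYr B (γ θ)) ^ 2) :=
      Real.abs_le_sqrt (by nlinarith [sq_nonneg (dXr B (γ θ))])
    set S := Real.sqrt ((dXr B (γ θ)) ^ 2 + (dYr B (γ θ)) ^ 2) with hS
    have hS0 : 0 ≤ S := Real.sqrt_nonneg _
    have hexp : Real.exp t₀ ≤ 2 * y := by
      have : Real.exp t₀ = y * Real.exp (-(θ * (u - t₀))) := by
        rw [hy, ← Real.exp_add]; congr 1; ring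
      have h2 : Real.exp (-(θ * (u - t₀))) ≤ 2 := by
        apply exp_le_two_of
        rw [abs_neg, abs_mul, abs_of_nonneg hθ.1]
        nlinarith [abs_nonneg (u - t₀), hθ.2, hθ.1]
      rw [this]; nlinarith
    have hx2 : |x - x₀| ≤ ε * a₀ * y := by
      have : ε * a₀ * Real.exp t₀ ≤ ε * a₀ * (2 * y) := by gcongr
      linarith
    have hu2 : y * |u - t₀| ≤ y * ε := by
      have : |u - t₀| ≤ ε := by linarith
      gcongr
    rw [e, Real.norm_eq_abs, Real.norm_eq_abs]
    have hyS : y * S ≤ C₀ * (|B (γ θ)| + 1) := h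
    have hBB : |B (γ θ)| ≤ |B (γ θ) - b₀| + |b₀| := by
      have := abs_add_le (B (γ θ) - b₀) b₀
      simpa using this
    calc |(x - x₀) * dXr B (γ θ) + (y * (u - t₀)) * dYr B (γ θ)|
        ≤ |x - x₀| * |dXr B (γ θ)| + (y * |u - t₀|) * |dYr B (γ θ)| := by
          refine (abs_add_le _ _).trans ?_
          rw [abs_mul, abs_mul, abs_mul, abs_of_pos hy0]
      _ ≤ (ε * a₀ * y) * S + (y * ε) * S := by gcongr
      _ = ε * (1 + a₀) * (y * S) := by ring
      _ ≤ ε * (1 + a₀) * (C₀ * (|B (γ θ)| + 1)) := by gcongr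
      _ ≤ ε * (1 + a₀) * (C₀ * ((|B (γ θ) - b₀| + |b₀|) + 1)) := by gcongr
      _ = _ := by rw [hK]; ring
  have hG := norm_le_gronwallBound_of_norm_deriv_right_le (f := fun θ => B (γ θ) - b₀)
    (δ := 0) (a := 0) (b := 1) (K := K) (ε := K * (|b₀| + 1))
    (fun θ _ => (hd θ).continuousAt.continuousWithinAt)
    (fun θ _ => (hd θ).hasDerivWithinAt)
    (by simp [hγ, hb₀]) hbound 1 (by simp)
  rw [gronwallBound_of_K_ne_0 hKpos.ne'] at hG
  have hγ1 : γ 1 = (x, Real.exp u) := by simp [hγ]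
  simp only [hγ1, Real.norm_eq_abs, zero_mul, zero_add, sub_zero, mul_one] at hG
  have e1 : K * (|b₀| + 1) / K = |b₀| + 1 := by field_simp
  rw [e1] at hG
  have hexpK : Real.exp K - 1 ≤ K * Real.exp K := by
    have := Real.add_one_le_exp (-K)
    have h2 : Real.exp (-K) * Real.exp K = 1 := by rw [← Real.exp_add]; simp
    nlinarith [Real.exp_pos K]
  have hKK : Real.exp K ≤ Real.exp (C₀ * (1 + a₀)) := by
    apply Real.exp_le_exp.mpr
    have : 0 < C₀ * (1 + a₀) := by positivity
    rw [hK]; nlinarith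
  calc _ ≤ (|b₀| + 1) * (Real.exp K - 1) := hG
    _ ≤ (|b₀| + 1) * (K * Real.exp (C₀ * (1 + a₀))) := by
      gcongr
      exact hexpK.trans (by gcongr)
    _ = _ := by ring

lemma comp_cont (B : ℝ × ℝ → ℝ) (hB : ContDiffOn ℝ 1 B UHP) :
    Continuous (fun q : ℝ × ℝ => B (q.1, Real.exp q.2)) :=
  hB.continuousOn.comp_continuous (by fun_prop) (fun q => Real.exp_pos _)

lemma Atil_eq (A₁ A₂ : ℝ × ℝ → ℝ) (hB : ContDiffOn ℝ 1 (fieldB A₁ A₂) UHP) (t₀ : ℝ) (p : ℝ × ℝ) :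
    Atil A₁ A₂ t₀ p = -∫ u in t₀..p.2, fieldB A₁ A₂ (p.1, Real.exp u) * Real.exp (-u) := by
  unfold Atil
  rw [← intervalIntegral.integral_comp_mul_deriv' (f := Real.exp) (f' := Real.exp)
    (fun x _ => Real.hasDerivAt_exp x) Real.continuous_exp.continuousOn]
  · congr 1
    apply intervalIntegral.integral_congr
    intro u _
    simp only [Function.comp, Real.exp_neg]
    field_simp
  · rintro s ⟨u, _, rfl⟩
    have hc : ContinuousAt (fun s : ℝ => fieldB A₁ A₂ (p.1, s)) (Real.exp u) := by
      have h1 : ContinuousAt (fieldB A₁ A₂) (p.1, Real.exp u) :=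
        hB.continuousOn.continuousAt (uhp_isOpen.mem_nhds (Real.exp_pos u))
      exact ContinuousAt.comp (f := fun s : ℝ => (p.1, s)) h1 (by fun_prop)
    have := hc.div (continuousAt_id.pow 2) (by simp [Real.exp_ne_zero])
    exact this.continuousWithinAt

lemma Atil_cont (A₁ A₂ : ℝ × ℝ → ℝ) (hB : ContDiffOn ℝ 1 (fieldB A₁ A₂) UHP) (t₀ : ℝ) :
    Continuous (Atil A₁ A₂ t₀) := by
  have : Atil A₁ A₂ t₀ = fun p =>
      -∫ u in t₀..p.2, fieldB A₁ A₂ (p.1, Real.exp u) * Real.exp (-u) :=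
    funext (Atil_eq A₁ A₂ hB t₀)
  rw [this]
  refine Continuous.neg ?_
  have hc := comp_cont _ hB
  exact intervalIntegral.continuous_parametric_primitive_of_continuous
    (f := fun x u => fieldB A₁ A₂ (x, Real.exp u) * Real.exp (-u)) (μ := volume) (a₀ := t₀)
    (hc.mul (by fun_prop))

lemma Atil_sub_Azero (A₁ A₂ : ℝ × ℝ → ℝ) (hB : ContDiffOn ℝ 1 (fieldB A₁ A₂) UHP)
    (C₀ : ℝ) (hC₀ : 0 < C₀) (hH : H2 C₀ A₁ A₂)
    (a₀ : ℝ) (ha₀ : 1 < a₀) (ε : ℝ) (hε : 0 < ε) (hε1 : ε < 1) (x₀ t₀ x t : ℝ)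
    (hb : 1 < intenB A₁ A₂ (x₀, Real.exp t₀))
    (hx : |x - x₀| ≤ ε * a₀ * Real.exp t₀ / 2) (ht : |t - t₀| ≤ ε / 2) :
    |Atil A₁ A₂ t₀ (x, t) - Azero t₀ (fieldB A₁ A₂ (x₀, Real.exp t₀)) (x, t)| ≤
      Real.exp (-t₀) * ((4 * (C₀ * (1 + a₀)) * Real.exp (C₀ * (1 + a₀)) + 1) * ε ^ 2 *
        intenB A₁ A₂ (x₀, Real.exp t₀)) := by
  have hb' : 1 < |fieldB A₁ A₂ (x₀, Real.exp t₀)| := hb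
  unfold intenB
  set b₀ := fieldB A₁ A₂ (x₀, Real.exp t₀) with hb₀
  set M := 4 * (C₀ * (1 + a₀)) * Real.exp (C₀ * (1 + a₀)) + 1 with hM
  have hM0 : 0 < M := by positivity
  have hc : Continuous fun u => fieldB A₁ A₂ (x, Real.exp u) * Real.exp (-u) :=
    ((comp_cont _ hB).comp (by fun_prop : Continuous fun u : ℝ => (x, u))).mul (by fun_prop)
  have e : Atil A₁ A₂ t₀ (x, t) - Azero t₀ b₀ (x, t) =
      -∫ u in t₀..t, (fieldB A₁ A₂ (x, Real.exp u) * Real.exp (-u) - b₀ * Real.exp (-t₀)) := by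
    rw [intervalIntegral.integral_sub (hc.intervalIntegrable _ _) (by simp), Atil_eq _ _ hB]
    simp [Azero]; ring
  rw [e, abs_neg, ← Real.norm_eq_abs]
  have hpt : ∀ u ∈ Set.uIoc t₀ t,
      ‖fieldB A₁ A₂ (x, Real.exp u) * Real.exp (-u) - b₀ * Real.exp (-t₀)‖ ≤
        Real.exp (-t₀) * (M * ε * |b₀|) := by
    intro u hu
    have hu' : |u - t₀| ≤ ε / 2 :=
      (Set.abs_sub_left_of_mem_uIcc (Set.uIoc_subset_uIcc hu)).trans ht
    have hv := field_var _ hB C₀ hC₀ hH a₀ ha₀ ε hε hε1 x₀ t₀ x u hx hu'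
    rw [← hb₀] at hv
    have e2 : fieldB A₁ A₂ (x, Real.exp u) * Real.exp (-u) - b₀ * Real.exp (-t₀) =
        Real.exp (-t₀) * ((fieldB A₁ A₂ (x, Real.exp u) - b₀) * Real.exp (t₀ - u) +
          b₀ * (Real.exp (t₀ - u) - 1)) := by
      have : Real.exp (-u) = Real.exp (-t₀) * Real.exp (t₀ - u) := by
        rw [← Real.exp_add]; congr 1; ring
      rw [this]; ring
    have h2 : |t₀ - u| ≤ ε / 2 := by rw [abs_sub_comm]; exact hu'
    have h3 : Real.exp (t₀ - u) ≤ 2 := exp_le_two_of (by linarith)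
    have h4 := Real.abs_exp_sub_one_le (x := t₀ - u) (by linarith)
    have h5 : |Real.exp (t₀ - u) - 1| ≤ ε := by linarith
    rw [e2, Real.norm_eq_abs, abs_mul, abs_of_pos (Real.exp_pos _)]
    gcongr
    set E := Real.exp (C₀ * (1 + a₀)) with hE
    have hE0 : 0 < E := Real.exp_pos _
    calc _ ≤ |fieldB A₁ A₂ (x, Real.exp u) - b₀| * Real.exp (t₀ - u)
          + |b₀| * |Real.exp (t₀ - u) - 1| := by
          refine (abs_add_le _ _).trans ?_
          rw [abs_mul, abs_mul, abs_of_pos (Real.exp_pos (t₀ - u))]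
      _ ≤ (ε * (C₀ * (1 + a₀)) * E * (|b₀| + 1)) * 2 + |b₀| * ε := by gcongr
      _ ≤ (ε * (C₀ * (1 + a₀)) * E * (|b₀| + |b₀|)) * 2 + |b₀| * ε := by gcongr
      _ = M * ε * |b₀| := by rw [hM]; ring
  refine (intervalIntegral.norm_integral_le_of_norm_le_const hpt).trans ?_
  have : |t - t₀| ≤ ε := by linarith
  calc _ ≤ Real.exp (-t₀) * (M * ε * |b₀|) * ε := by gcongr
    _ = _ := by ring

lemma int_form (w : ℝ × ℝ → ℂ) (hw : ContDiff ℝ (⊤ : ℕ∞) w) (hc : HasCompactSupport w)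
    (A : ℝ × ℝ → ℝ) (hA : Continuous A) (c : ℝ) :
    Integrable (fun p => c * ‖-Complex.I * dX w p - (A p : ℂ) * w p‖ ^ 2
      + ‖dY w p‖ ^ 2 + (1/4) * ‖w p‖ ^ 2) := by
  have hf : Continuous (fderiv ℝ w) := hw.continuous_fderiv (by simp)
  have hX : Continuous (dX w) := hf.clm_apply continuous_const
  have hY : Continuous (dY w) := hf.clm_apply continuous_const
  have hw0 : Continuous w := hw.continuous
  apply Continuous.integrable_of_hasCompactSupport
  · fun_prop
  · refine HasCompactSupport.intro hc (fun p hp => ?_)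
    have h1 : w p = 0 := image_eq_zero_of_notMem_tsupport hp
    have h2 : fderiv ℝ w p = 0 := fderiv_of_notMem_tsupport ℝ hp
    simp [dX, dY, h1, h2]

lemma sq_upper (x y τ : ℝ) (hτ : 0 < τ) :
    (x + y) ^ 2 ≤ (1 + τ ^ 2) * x ^ 2 + (1 + (τ ^ 2)⁻¹) * y ^ 2 := by
  have : (1 + τ ^ 2) * x ^ 2 + (1 + (τ ^ 2)⁻¹) * y ^ 2 - (x + y) ^ 2 = (τ * x - τ⁻¹ * y) ^ 2 := by
    field_simp; ring
  nlinarith [sq_nonneg (τ * x - τ⁻¹ * y)]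

lemma sq_lower (x y τ : ℝ) (hτ : 0 < τ) :
    (1 - τ ^ 2) * x ^ 2 + (1 - (τ ^ 2)⁻¹) * y ^ 2 ≤ (x - y) ^ 2 := by
  have : (x - y) ^ 2 - ((1 - τ ^ 2) * x ^ 2 + (1 - (τ ^ 2)⁻¹) * y ^ 2) = (τ * x - τ⁻¹ * y) ^ 2 := by
    field_simp; ring
  nlinarith [sq_nonneg (τ * x - τ⁻¹ * y)]

/-- comparison of `q̂^{Ã,0}_K` with the constant-field form `q^{A⁰,0}_K`. -/
theorem form_comparison_constant_field
    (C₀ : ℝ) (hC₀ : 0 < C₀) (a₀ : ℝ) (ha₀ : 1 < a₀) :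
    ∃ C > 0, ∀ A₁ A₂ : ℝ × ℝ → ℝ, ContDiffOn ℝ 2 A₁ UHP → ContDiffOn ℝ 2 A₂ UHP →
      H2 C₀ A₁ A₂ →
      ∀ a : ℝ, 1 / a₀ < a → a ≤ a₀ → ∀ ε₀ : ℝ, 0 < ε₀ → ε₀ < 1 →
      ∀ x₀ t₀ : ℝ, 1 < intenB A₁ A₂ (x₀, Real.exp t₀) →
      ∀ τ : ℝ, 0 < τ → τ < 1 →
      ∀ w : ℝ × ℝ → ℂ, IsTestOn (Krect x₀ t₀ a ε₀) w →
        (1 - τ ^ 2) * qK0 x₀ t₀ a ε₀ (fieldB A₁ A₂ (x₀, Real.exp t₀)) w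
            + (1 - (τ ^ 2)⁻¹) * C * ε₀ ^ 4 * intenB A₁ A₂ (x₀, Real.exp t₀) ^ 2 *
              (∫ p in Krect x₀ t₀ a ε₀, ‖w p‖ ^ 2)
          ≤ qhatK0 A₁ A₂ x₀ t₀ a ε₀ w ∧
        qhatK0 A₁ A₂ x₀ t₀ a ε₀ w ≤
          (1 + τ ^ 2) * qK0 x₀ t₀ a ε₀ (fieldB A₁ A₂ (x₀, Real.exp t₀)) w
            + (1 + (τ ^ 2)⁻¹) * C * ε₀ ^ 4 * intenB A₁ A₂ (x₀, Real.exp t₀) ^ 2 *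
              (∫ p in Krect x₀ t₀ a ε₀, ‖w p‖ ^ 2) := by
  set M := 4 * (C₀ * (1 + a₀)) * Real.exp (C₀ * (1 + a₀)) + 1 with hM
  have hM0 : 0 < M := by positivity
  refine ⟨M ^ 2, by positivity, ?_⟩
  intro A₁ A₂ h1 h2 hH a ha1 ha2 ε hε hε1 x₀ t₀ hb τ hτ hτ1 w hw
  obtain ⟨hws, hwc, _⟩ := hw
  have hB := fieldB_contDiffOn h1 h2
  have hest : ∀ p ∈ Krect x₀ t₀ a ε,
      Real.exp t₀ * |Atil A₁ A₂ t₀ p - Azero t₀ (fieldB A₁ A₂ (x₀, Real.exp t₀)) p| ≤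
        M * ε ^ 2 * intenB A₁ A₂ (x₀, Real.exp t₀) := by
    rintro ⟨x, t⟩ ⟨hx, ht⟩
    have hx' : |x - x₀| ≤ ε * a₀ * Real.exp t₀ / 2 := by
      have : ε * a * Real.exp t₀ ≤ ε * a₀ * Real.exp t₀ := by gcongr
      have := hx.1
      have := hx.2
      simp only at *
      rw [abs_le]; constructor <;> linarith
    have ht' : |t - t₀| ≤ ε / 2 := by
      have := ht.1
      have := ht.2
      simp only at *
      rw [abs_le]; constructor <;> linarith
    have := Atil_sub_Azero A₁ A₂ hB C₀ hC₀ hH a₀ ha₀ ε hε hε1 x₀ t₀ x t hb hx' ht'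
    have h3 : Real.exp t₀ * Real.exp (-t₀) = 1 := by rw [← Real.exp_add]; simp
    calc _ ≤ Real.exp t₀ * (Real.exp (-t₀) *
          (M * ε ^ 2 * intenB A₁ A₂ (x₀, Real.exp t₀))) := by gcongr
      _ = _ := by rw [← mul_assoc, h3, one_mul]
  set b₀ := fieldB A₁ A₂ (x₀, Real.exp t₀) with hb₀
  set β := intenB A₁ A₂ (x₀, Real.exp t₀) with hβ
  have hKm : MeasurableSet (Krect x₀ t₀ a ε) := measurableSet_Ioo.prod measurableSet_Ioo
  have hA0c : Continuous (Azero t₀ b₀) := by unfold Azero; fun_prop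
  have I1 := (int_form w hws hwc _ (Atil_cont A₁ A₂ hB t₀) (Real.exp (2 * t₀))).integrableOn
    (s := Krect x₀ t₀ a ε)
  have I0 := (int_form w hws hwc _ hA0c (Real.exp (2 * t₀))).integrableOn
    (s := Krect x₀ t₀ a ε)
  have Iw : IntegrableOn (fun p => ‖w p‖ ^ 2) (Krect x₀ t₀ a ε) := by
    apply Integrable.integrableOn
    apply Continuous.integrable_of_hasCompactSupport
    · have := hws.continuous
      fun_prop
    · refine HasCompactSupport.intro hwc (fun p hp => ?_)
      simp [image_eq_zero_of_notMem_tsupport hp]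
  have hτ2 : 1 ≤ (τ ^ 2)⁻¹ := by
    rw [one_le_inv₀ (by positivity)]; nlinarith
  have hexp2 : Real.exp (2 * t₀) = Real.exp t₀ ^ 2 := by rw [← Real.exp_nat_mul]; norm_num
  have hkey : ∀ p ∈ Krect x₀ t₀ a ε,
      (1 - τ ^ 2) * (Real.exp (2 * t₀) * ‖-Complex.I * dX w p - (Azero t₀ b₀ p : ℂ) * w p‖ ^ 2)
        + (1 - (τ ^ 2)⁻¹) * (M ^ 2 * ε ^ 4 * β ^ 2 * ‖w p‖ ^ 2) ≤
      Real.exp (2 * t₀) * ‖-Complex.I * dX w p - (Atil A₁ A₂ t₀ p : ℂ) * w p‖ ^ 2 ∧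
      Real.exp (2 * t₀) * ‖-Complex.I * dX w p - (Atil A₁ A₂ t₀ p : ℂ) * w p‖ ^ 2 ≤
      (1 + τ ^ 2) * (Real.exp (2 * t₀) * ‖-Complex.I * dX w p - (Azero t₀ b₀ p : ℂ) * w p‖ ^ 2)
        + (1 + (τ ^ 2)⁻¹) * (M ^ 2 * ε ^ 4 * β ^ 2 * ‖w p‖ ^ 2) := by
    intro p hp
    have hp' := hest p hp
    set u : ℂ := -Complex.I * dX w p - (Azero t₀ b₀ p : ℂ) * w p with hu
    set v : ℂ := -Complex.I * dX w p - (Atil A₁ A₂ t₀ p : ℂ) * w p with hv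
    have hvu : ‖v - u‖ = |Atil A₁ A₂ t₀ p - Azero t₀ b₀ p| * ‖w p‖ := by
      have : v - u = -(((Atil A₁ A₂ t₀ p - Azero t₀ b₀ p : ℝ) : ℂ) * w p) := by
        rw [hu, hv]; push_cast; ring
      rw [this, norm_neg, norm_mul, Complex.norm_real, Real.norm_eq_abs]
    set E := Real.exp t₀ with hE
    have hE0 : 0 < E := Real.exp_pos _
    have hD : E * ‖v - u‖ ≤ M * ε ^ 2 * β * ‖w p‖ := by
      rw [hvu, ← mul_assoc]; gcongr
    have hD2 : (E * ‖v - u‖) ^ 2 ≤ M ^ 2 * ε ^ 4 * β ^ 2 * ‖w p‖ ^ 2 := by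
      calc _ ≤ (M * ε ^ 2 * β * ‖w p‖) ^ 2 := by gcongr
        _ = _ := by ring
    have t1 : ‖v‖ ≤ ‖u‖ + ‖v - u‖ := by
      have := norm_add_le u (v - u); simpa using this
    have t2 : |‖u‖ - ‖v - u‖| ≤ ‖v‖ := by
      rw [abs_le]
      have := norm_add_le u (v - u)
      have h5 : ‖u‖ ≤ ‖v‖ + ‖v - u‖ := by
        have := norm_sub_le v (v - u); simpa using this
      have h6 : ‖v - u‖ ≤ ‖v‖ + ‖u‖ := norm_sub_le v u
      constructor <;> linarith
    have l := sq_lower (E * ‖u‖) (E * ‖v - u‖) τ hτ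
    have r := sq_upper (E * ‖u‖) (E * ‖v - u‖) τ hτ
    have t2' : (‖u‖ - ‖v - u‖) ^ 2 ≤ ‖v‖ ^ 2 := by
      rw [← sq_abs]; gcongr
    have t1' : ‖v‖ ^ 2 ≤ (‖u‖ + ‖v - u‖) ^ 2 := by gcongr
    have t2E := mul_le_mul_of_nonneg_left t2' (sq_nonneg E)
    have t1E := mul_le_mul_of_nonneg_left t1' (sq_nonneg E)
    have d1 := mul_le_mul_of_nonneg_left hD2 (sub_nonneg.mpr hτ2)
    have d2 := mul_le_mul_of_nonneg_left hD2 (by positivity : 0 ≤ 1 + (τ ^ 2)⁻¹)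
    rw [hexp2]
    constructor <;> linarith
  unfold qhatK0 qK0
  constructor
  · calc _ = ∫ p in Krect x₀ t₀ a ε, ((1 - τ ^ 2) *
          (Real.exp (2 * t₀) * ‖-Complex.I * dX w p - (Azero t₀ b₀ p : ℂ) * w p‖ ^ 2
            + ‖dY w p‖ ^ 2 + (1/4) * ‖w p‖ ^ 2)
          + (1 - (τ ^ 2)⁻¹) * M ^ 2 * ε ^ 4 * β ^ 2 * ‖w p‖ ^ 2) := by
          rw [integral_add (I0.const_mul _) (Iw.const_mul _), integral_const_mul,
            integral_const_mul]
      _ ≤ _ := by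
          refine setIntegral_mono_on ((I0.const_mul _).add (Iw.const_mul _)) I1 hKm ?_
          intro p hp
          have := (hkey p hp).1
          have h7 : 0 ≤ τ ^ 2 * (‖dY w p‖ ^ 2 + (1/4) * ‖w p‖ ^ 2) := by positivity
          linarith
  · calc _ ≤ ∫ p in Krect x₀ t₀ a ε, ((1 + τ ^ 2) *
          (Real.exp (2 * t₀) * ‖-Complex.I * dX w p - (Azero t₀ b₀ p : ℂ) * w p‖ ^ 2
            + ‖dY w p‖ ^ 2 + (1/4) * ‖w p‖ ^ 2)
          + (1 + (τ ^ 2)⁻¹) * M ^ 2 * ε ^ 4 * β ^ 2 * ‖w p‖ ^ 2) := by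
          refine setIntegral_mono_on I1 ((I0.const_mul _).add (Iw.const_mul _)) hKm ?_
          intro p hp
          have := (hkey p hp).2
          have h7 : 0 ≤ τ ^ 2 * (‖dY w p‖ ^ 2 + (1/4) * ‖w p‖ ^ 2) := by positivity
          linarith
      _ = _ := by
          rw [integral_add (I0.const_mul _) (Iw.const_mul _), integral_const_mul,
            integral_const_mul]
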